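/- arXiv:2107.07799 — 6 statements merged into one kernel-verified Lean document; each statement's English description precedes it below -/
import Mathlib

section
/- Assume K ≥ 2, p ≥ 1, that each empirical covariance matrix S^(k) ∈ ℝ^{p×p} (k = 1,…,K) is symmetric positive semidefinite with strictly positive diagonal entries, that n_k > 0 for each k, and that λ₁ > 0 and λ₂ ≥ 0. Then the fused joint graphical lasso objective F attains its infimum over K-tuples of symmetric positive definite p×p matrices, and the minimizer is unique. -/
open Matrix Finset

/-- The fused joint graphical lasso objective on `K`-tuples of `p × p` matrices. -/
noncomputable def fusedJGL {p K : ℕ} (n : Fin K → ℝ) (S : Fin K → Matrix (Fin p) (Fin p) ℝ)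
    (l1 l2 : ℝ) (Θ : Fin K → Matrix (Fin p) (Fin p) ℝ) : ℝ :=
  (∑ k, n k * (-Real.log (Θ k).det + (S k * Θ k).trace))
    + l1 * ∑ k, ∑ i, ∑ j, (if i ≠ j then |Θ k i j| else 0)
    + l2 * ∑ k, ∑ l, (if k ≠ l then ∑ i, ∑ j, |Θ k i j - Θ l i j| else 0)

/-!
The Gaussian log-likelihood is strictly concave: applying `log x ≤ x - 1` to the eigenvalues of
`B` relative to `A` gives `log det B ≤ log det A + tr (A⁻¹ B) - p`, strictly unless `A = B`, so
`log det` has a strict supergradient everywhere. This gives uniqueness, and it also shows that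
`log det A` grows more slowly than any `ε tr A`.

For existence, positive diagonal entries of `S` suffice because a small multiple of the
off-diagonal part of `tr (S Θ)` is absorbed by the ℓ¹ penalty, and what remains dominates
`c tr Θ` for some `c > 0`. A bound `c tr Θ - log det Θ ≤ Q` then confines `Θ` to a compact set of
positive definite matrices, since for positive semidefinite `Θ` it is the closed condition
`exp (c tr Θ - Q) ≤ det Θ`. The fused penalty enters only through convexity and nonnegativity.
-/

section Convexity

variable {E : Type*} [AddCommGroup E] [Module ℝ E]

lemma convexOn_sum {ι : Type*} {s : Set E} (hs : Convex ℝ s) (t : Finset ι) {f : ι → E → ℝ}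
    (hf : ∀ i ∈ t, ConvexOn ℝ s (f i)) : ConvexOn ℝ s fun x => ∑ i ∈ t, f i x := by
  classical
  induction t using Finset.induction_on with
  | empty => simpa using convexOn_const 0 hs
  | insert i t hi ih =>
    simp only [Finset.sum_insert hi]
    exact (hf i (mem_insert_self i t)).add (ih fun j hj => hf j (mem_insert_of_mem hj))

lemma convexOn_abs_linearMap (f : E →ₗ[ℝ] ℝ) : ConvexOn ℝ Set.univ fun x => |f x| :=
  (convexOn_norm convex_univ).comp_linearMap f

lemma strictConvexOn_const_mul {s : Set E} {f : E → ℝ} {c : ℝ} (hc : 0 < c)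
    (hf : StrictConvexOn ℝ s f) : StrictConvexOn ℝ s fun x => c * f x := by
  refine ⟨hf.1, fun x hx y hy hne a b ha hb hab => ?_⟩
  calc c * f (a • x + b • y) < c * (a • f x + b • f y) := by
        gcongr
        exact hf.2 hx hy hne ha hb hab
    _ = a • (c * f x) + b • (c * f y) := by simp only [smul_eq_mul]; ring

lemma strictConvexOn_sum_pi {ι : Type*} [Fintype ι] {E : ι → Type*} [∀ i, AddCommGroup (E i)]
    [∀ i, Module ℝ (E i)] {s : ∀ i, Set (E i)} {f : ∀ i, E i → ℝ}
    (hf : ∀ i, StrictConvexOn ℝ (s i) (f i)) :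
    StrictConvexOn ℝ {x | ∀ i, x i ∈ s i} fun x : ∀ i, E i => ∑ i, f i (x i) := by
  refine ⟨fun x hx y hy a b ha hb hab i => (hf i).1 (hx i) (hy i) ha hb hab,
    fun x hx y hy hne a b ha hb hab => ?_⟩
  obtain ⟨i, hi⟩ := Function.ne_iff.mp hne
  simp only [smul_sum, ← sum_add_distrib]
  exact sum_lt_sum
    (fun j _ => (hf j).convexOn.2 (hx j) (hy j) ha.le hb.le hab)
    ⟨i, mem_univ i, (hf i).2 (hx i) (hy i) hi ha hb hab⟩

end Convexity

lemma le_sub_sum_add_of_sum_le {ι : Type*} [Fintype ι] {f g : ι → ℝ} {Q : ℝ}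
    (hgf : ∀ i, g i ≤ f i) (hf : ∑ i, f i ≤ Q) (i : ι) : f i ≤ Q - ∑ j, g j + g i := by
  have hgap : f i - g i ≤ ∑ j, (f j - g j) :=
    single_le_sum (f := fun j => f j - g j) (fun j _ => sub_nonneg.mpr (hgf j)) (mem_univ i)
  rw [sum_sub_distrib] at hgap
  linarith

lemma exists_isMinOn_of_sublevel_subset {X : Type*} [TopologicalSpace X] {s K : Set X}
    {f : X → ℝ} {x₀ : X} (hx₀ : x₀ ∈ s) (hK : IsCompact K) (hKs : K ⊆ s) (hf : ContinuousOn f s)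
    (hsub : ∀ x ∈ s, f x ≤ f x₀ → x ∈ K) : ∃ x ∈ s, IsMinOn f s x := by
  have hx₀K : x₀ ∈ K := hsub x₀ hx₀ le_rfl
  obtain ⟨x, hxK, hx⟩ := hK.exists_isMinOn ⟨x₀, hx₀K⟩ (hf.mono hKs)
  refine ⟨x, hKs hxK, fun y hy => ?_⟩
  rcases le_total (f y) (f x₀) with hle | hge
  · exact hx (hsub y hy hle)
  · exact (hx hx₀K).trans hge

section PosSemidef

variable {m : Type*} [Fintype m] {A B : Matrix m m ℝ}

open scoped MatrixOrder in
lemma exists_eq_conjTranspose_mul_self (hA : A.PosSemidef) :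
    ∃ C : Matrix m m ℝ, A = Cᴴ * C := by
  classical exact CStarAlgebra.nonneg_iff_eq_star_mul_self.mp hA.nonneg

lemma trace_mul_nonneg (hA : A.PosSemidef) (hB : B.PosSemidef) :
    0 ≤ (A * B).trace := by
  obtain ⟨C, rfl⟩ := exists_eq_conjTranspose_mul_self hA
  rw [Matrix.mul_assoc, Matrix.trace_mul_comm]
  exact (hB.mul_mul_conjTranspose_same C).trace_nonneg

lemma abs_apply_le_trace (hA : A.PosSemidef) (i j : m) : |A i j| ≤ A.trace := by
  have hdiag (i : m) : A i i ≤ A.trace :=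
    single_le_sum (f := fun i => A i i) (fun _ _ => hA.diag_nonneg) (mem_univ i)
  have hmean : |A i j| ≤ (A i i + A j j) / 2 := by
    obtain ⟨C, rfl⟩ := exists_eq_conjTranspose_mul_self hA
    simp only [Matrix.mul_apply, conjTranspose_apply, star_trivial, ← sum_add_distrib, sum_div]
    refine (abs_sum_le_sum_abs _ _).trans (sum_le_sum fun k _ => abs_le.mpr ⟨?_, ?_⟩)
    · linarith [sq_nonneg (C k i + C k j)]
    · linarith [sq_nonneg (C k i - C k j)]
  linarith [hdiag i, hdiag j]

lemma isClosed_setOf_posSemidef {m : Type*} [Finite m] :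
    IsClosed {A : Matrix m m ℝ | A.PosSemidef} := by
  cases nonempty_fintype m
  simp only [posSemidef_iff_dotProduct_mulVec, Set.ofPred_and, Set.ofPred_forall, IsHermitian]
  exact (isClosed_eq (by fun_prop) (by fun_prop)).inter
    (isClosed_iInter fun x => isClosed_le (by fun_prop) (by fun_prop))

lemma isCompact_setOf_posSemidef_trace_le (R : ℝ) :
    IsCompact {A : Matrix m m ℝ | A.PosSemidef ∧ A.trace ≤ R} := by
  have hbox : IsCompact {A : Matrix m m ℝ | ∀ i j, A i j ∈ Set.Icc (-R) R} :=
    isCompact_pi_infinite fun _ => isCompact_pi_infinite fun _ => isCompact_Icc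
  refine hbox.of_isClosed_subset ?_ fun A hA i j =>
    abs_le.mp ((abs_apply_le_trace hA.1 i j).trans hA.2)
  exact isClosed_setOf_posSemidef.inter (isClosed_le continuous_id.matrix_trace continuous_const)

end PosSemidef

lemma convex_setOf_posDef {m : Type*} : Convex ℝ {A : Matrix m m ℝ | A.PosDef} :=
  convex_iff_forall_pos.mpr fun _ hA _ hB _ _ ha hb _ => (hA.smul ha).add (hB.smul hb)

section LogDet

variable {m : Type*} [Fintype m] [DecidableEq m] {A B : Matrix m m ℝ}

lemma log_det_eq_sum_log_eigenvalues (hA : A.PosDef) :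
    Real.log A.det = ∑ i, Real.log (hA.1.eigenvalues i) := by
  rw [hA.1.det_eq_prod_eigenvalues]
  exact Real.log_prod fun i _ => (hA.eigenvalues_pos i).ne'

lemma trace_sub_card_eq_sum_eigenvalues_sub_one (hA : A.IsHermitian) :
    A.trace - Fintype.card m = ∑ i, (hA.eigenvalues i - 1) := by
  simp [hA.trace_eq_sum_eigenvalues]

lemma eq_one_of_eigenvalues_eq_one (hA : A.IsHermitian) (h : ∀ i, hA.eigenvalues i = 1) :
    A = 1 := by
  rw [hA.spectral_theorem, funext h]
  simp

lemma log_det_le_trace_sub_card (hA : A.PosDef) :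
    Real.log A.det ≤ A.trace - Fintype.card m := by
  rw [log_det_eq_sum_log_eigenvalues hA, trace_sub_card_eq_sum_eigenvalues_sub_one hA.1]
  exact sum_le_sum fun i _ => Real.log_le_sub_one_of_pos (hA.eigenvalues_pos i)

lemma log_det_lt_trace_sub_card (hA : A.PosDef) (hne : A ≠ 1) :
    Real.log A.det < A.trace - Fintype.card m := by
  obtain ⟨i, hi⟩ : ∃ i, hA.1.eigenvalues i ≠ 1 := by
    by_contra! h
    exact hne (eq_one_of_eigenvalues_eq_one hA.1 h)
  rw [log_det_eq_sum_log_eigenvalues hA, trace_sub_card_eq_sum_eigenvalues_sub_one hA.1]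
  exact sum_lt_sum (fun i _ => Real.log_le_sub_one_of_pos (hA.eigenvalues_pos i))
    ⟨i, mem_univ i, Real.log_lt_sub_one_of_pos (hA.eigenvalues_pos i) hi⟩

open scoped MatrixOrder in
lemma log_det_lt_log_det_add_trace_inv_mul_sub_card (hA : A.PosDef) (hB : B.PosDef)
    (hne : A ≠ B) :
    Real.log B.det < Real.log A.det + ((A⁻¹ * B).trace - Fintype.card m) := by
  have hAdet : IsUnit A.det := hA.det_pos.ne'.isUnit
  obtain ⟨C, hC, hAC⟩ :=
    CStarAlgebra.isStrictlyPositive_iff_eq_star_mul_self.mp hA.inv.isStrictlyPositive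
  have hM : (C * B * star C).PosDef := (Matrix.IsUnit.posDef_star_right_conjugate_iff hC).mpr hB
  have hM_ne : C * B * star C ≠ 1 := by
    intro h
    have hinv : A⁻¹ * B = 1 := by rw [hAC, Matrix.mul_assoc, mul_eq_one_comm.mp h]
    exact hne <| calc
      A = A * (A⁻¹ * B) := by rw [hinv, Matrix.mul_one]
      _ = B := Matrix.mul_nonsing_inv_cancel_left A B hAdet
  have hM_trace : (C * B * star C).trace = (A⁻¹ * B).trace := by
    rw [Matrix.trace_mul_comm, ← Matrix.mul_assoc, ← hAC]
  have hM_det : (C * B * star C).det = A.det⁻¹ * B.det := by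
    rw [Matrix.det_mul_comm, ← Matrix.mul_assoc, ← hAC, det_mul, det_nonsing_inv,
      Ring.inverse_eq_inv']
  have hlog := log_det_lt_trace_sub_card hM hM_ne
  rw [hM_trace, hM_det, Real.log_mul (inv_ne_zero hA.det_pos.ne') hB.det_pos.ne',
    Real.log_inv] at hlog
  linarith

lemma strictConcaveOn_log_det :
    StrictConcaveOn ℝ {A : Matrix m m ℝ | A.PosDef} fun A => Real.log A.det := by
  refine ⟨convex_setOf_posDef, fun A hA B hB hne a b ha hb hab => ?_⟩
  set C := a • A + b • B with hC
  have hCpos : C.PosDef := convex_setOf_posDef hA hB ha.le hb.le hab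
  have hCA : C ≠ A := fun h => hne (left_mem_openSegment_iff.mp ⟨a, b, ha, hb, hab, h⟩)
  have hCB : C ≠ B := fun h => hne (right_mem_openSegment_iff.mp ⟨a, b, ha, hb, hab, h⟩)
  have htrace : a * (C⁻¹ * A).trace + b * (C⁻¹ * B).trace = Fintype.card m := by
    rw [← Matrix.trace_one, ← Matrix.nonsing_inv_mul C hCpos.det_pos.ne'.isUnit]
    nth_rw 4 [hC]
    simp [Matrix.mul_add]
  have hlogA := log_det_lt_log_det_add_trace_inv_mul_sub_card hCpos hA hCA
  have hlogB := log_det_lt_log_det_add_trace_inv_mul_sub_card hCpos hB hCB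
  simp only [smul_eq_mul]
  calc a * Real.log A.det + b * Real.log B.det
      < a * (Real.log C.det + ((C⁻¹ * A).trace - Fintype.card m))
        + b * (Real.log C.det + ((C⁻¹ * B).trace - Fintype.card m)) := by gcongr
    _ = (a + b) * Real.log C.det + (a * (C⁻¹ * A).trace + b * (C⁻¹ * B).trace
        - (a + b) * Fintype.card m) := by ring
    _ = Real.log C.det := by rw [htrace, hab]; ring

lemma strictConvexOn_neg_log_det_add_trace_mul (S : Matrix m m ℝ) :
    StrictConvexOn ℝ {A : Matrix m m ℝ | A.PosDef} fun A =>
      -Real.log A.det + (S * A).trace :=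
  strictConcaveOn_log_det.neg.add_convexOn
    ((traceLinearMap m ℝ ℝ ∘ₗ LinearMap.mulLeft ℝ S).convexOn convex_setOf_posDef)

lemma log_det_le_mul_trace_sub (hA : A.PosDef) {ε : ℝ} (hε : 0 < ε) :
    Real.log A.det ≤ ε * A.trace - Fintype.card m * (1 + Real.log ε) := by
  have h := log_det_le_trace_sub_card (hA.smul hε)
  rw [det_smul, trace_smul, smul_eq_mul, Real.log_mul (by positivity) hA.det_pos.ne',
    Real.log_pow] at h
  linarith

lemma posDef_and_sub_log_det_le_iff {t Q : ℝ} :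
    A.PosDef ∧ t - Real.log A.det ≤ Q ↔ A.PosSemidef ∧ Real.exp (t - Q) ≤ A.det := by
  constructor
  · rintro ⟨hA, hlog⟩
    exact ⟨hA.posSemidef, (Real.le_log_iff_exp_le hA.det_pos).mp (by linarith)⟩
  · rintro ⟨hA, hdet⟩
    have hpos : 0 < A.det := (Real.exp_pos _).trans_le hdet
    exact ⟨hA.posDef_iff_det_ne_zero.mpr hpos.ne',
      by linarith [(Real.le_log_iff_exp_le hpos).mpr hdet]⟩

lemma isCompact_setOf_posDef_mul_trace_sub_log_det_le {c : ℝ} (hc : 0 < c) (Q : ℝ) :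
    IsCompact {A : Matrix m m ℝ | A.PosDef ∧ c * A.trace - Real.log A.det ≤ Q} := by
  set L := Fintype.card m * (1 + Real.log (c / 2))
  refine (isCompact_setOf_posSemidef_trace_le ((Q - L) / (c / 2))).of_isClosed_subset ?_ ?_
  · simp only [posDef_and_sub_log_det_le_iff]
    exact isClosed_setOf_posSemidef.inter (isClosed_le
      (Real.continuous_exp.comp ((continuous_const.mul continuous_id.matrix_trace).sub
        continuous_const)) continuous_id.matrix_det)
  · rintro A ⟨hA, hQ⟩
    refine ⟨hA.posSemidef, (le_div_iff₀' (half_pos hc)).mpr ?_⟩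
    linarith [log_det_le_mul_trace_sub hA (half_pos hc)]

end LogDet

open scoped Matrix.Norms.Elementwise in
lemma continuous_of_convexOn_univ {ι m : Type*} [Finite ι] [Finite m]
    {f : (ι → Matrix m m ℝ) → ℝ} (hf : ConvexOn ℝ Set.univ f) : Continuous f := by
  cases nonempty_fintype ι
  cases nonempty_fintype m
  exact hf.locallyLipschitz.continuous

section OffDiagonal

variable {m : Type*} [Fintype m] [DecidableEq m]

/-- The entrywise `ℓ¹` seminorm of the off-diagonal part of a matrix: the sparsity penalty of the
graphical lasso. -/
def offDiagL1 (A : Matrix m m ℝ) : ℝ := ∑ i, ∑ j, if i ≠ j then |A i j| else 0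

lemma offDiagL1_nonneg (A : Matrix m m ℝ) : 0 ≤ offDiagL1 A :=
  sum_nonneg fun _ _ => sum_nonneg fun _ _ => by split_ifs <;> positivity

lemma convexOn_offDiagL1 : ConvexOn ℝ Set.univ (offDiagL1 : Matrix m m ℝ → ℝ) := by
  refine convexOn_sum convex_univ _ fun i _ => convexOn_sum convex_univ _ fun j _ => ?_
  split_ifs
  · exact convexOn_abs_linearMap (entryLinearMap ℝ ℝ i j)
  · exact convexOn_const 0 convex_univ

lemma convexOn_sum_offDiagL1 {ι : Type*} [Fintype ι] :
    ConvexOn ℝ Set.univ fun Θ : ι → Matrix m m ℝ => ∑ k, offDiagL1 (Θ k) := by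
  let proj (k : ι) : (ι → Matrix m m ℝ) →ₗ[ℝ] Matrix m m ℝ := LinearMap.proj k
  exact convexOn_sum convex_univ _ fun k _ => convexOn_offDiagL1.comp_linearMap (proj k)

lemma mul_trace_sub_mul_offDiagL1_le_trace_mul {S A : Matrix m m ℝ} {s M : ℝ}
    (hs : ∀ i, s ≤ S i i) (hM : ∀ i j, |S i j| ≤ M) (hA : A.PosSemidef) :
    s * A.trace - M * offDiagL1 A ≤ (S * A).trace := by
  have hentry (i j : m) :
      (if i = j then s * A i i else 0) - M * (if i ≠ j then |A i j| else 0) ≤ S i j * A j i := by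
    have hsymm : A j i = A i j := by simpa using hA.1.apply i j
    by_cases hij : i = j
    · subst hij
      simpa using mul_le_mul_of_nonneg_right (hs i) (hA.diag_nonneg (i := i))
    · calc (if i = j then s * A i i else 0) - M * (if i ≠ j then |A i j| else 0)
          = -(M * |A i j|) := by simp [hij]
        _ ≤ -(|S i j| * |A i j|) := by gcongr; exact hM i j
        _ ≤ S i j * A j i := by rw [hsymm, ← abs_mul]; exact neg_abs_le _
  calc s * A.trace - M * offDiagL1 A
      = ∑ i, ∑ j, ((if i = j then s * A i i else 0) - M * (if i ≠ j then |A i j| else 0)) := by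
        simp [offDiagL1, trace, mul_sum]
    _ ≤ ∑ i, ∑ j, S i j * A j i := sum_le_sum fun i _ => sum_le_sum fun j _ => hentry i j
    _ = (S * A).trace := by simp [trace, Matrix.mul_apply]

lemma exists_pos_mul_trace_le_trace_mul_add_offDiagL1 {S : Matrix m m ℝ} (hS : S.PosSemidef)
    (hSd : ∀ i, 0 < S i i) {α : ℝ} (hα : 0 < α) :
    ∃ c > 0, ∀ A : Matrix m m ℝ, A.PosSemidef →
      c * A.trace ≤ (S * A).trace + α * offDiagL1 A := by
  obtain ⟨s, hs, hsS⟩ : ∃ s > 0, ∀ i, s ≤ S i i := by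
    cases isEmpty_or_nonempty m
    · exact ⟨1, one_pos, isEmptyElim⟩
    · obtain ⟨i, hi⟩ := Finite.exists_min fun i => S i i
      exact ⟨S i i, hSd i, hi⟩
  have hM : 0 ≤ S.trace := hS.trace_nonneg
  set t := α / (S.trace + α)
  have ht : 0 < t := div_pos hα (by positivity)
  have ht_one : t ≤ 1 := div_le_one_of_le₀ (by linarith) (by positivity)
  have htM : t * S.trace ≤ α := by
    rw [div_mul_eq_mul_div, div_le_iff₀ (by positivity)]
    nlinarith
  refine ⟨t * s, mul_pos ht hs, fun A hA => ?_⟩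
  have hoff := offDiagL1_nonneg A
  have htrace := trace_mul_nonneg hS hA
  have hlower := mul_trace_sub_mul_offDiagL1_le_trace_mul hsS (abs_apply_le_trace hS) hA
  calc t * s * A.trace
      = t * (s * A.trace - S.trace * offDiagL1 A) + t * S.trace * offDiagL1 A := by ring
    _ ≤ t * (S * A).trace + α * offDiagL1 A := by gcongr
    _ ≤ (S * A).trace + α * offDiagL1 A := by
        gcongr
        exact mul_le_of_le_one_left htrace ht_one

end OffDiagonal

section JointGraphicalLasso

variable {ι m : Type*} [Fintype ι] [Fintype m] [DecidableEq m]

/-- The joint graphical lasso objective with an arbitrary penalty `P` coupling the classes; the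
fused and group lasso variants are obtained by choosing `P`. -/
noncomputable def jointGraphicalLasso (n : ι → ℝ) (S : ι → Matrix m m ℝ) (l1 : ℝ)
    (P : (ι → Matrix m m ℝ) → ℝ) (Θ : ι → Matrix m m ℝ) : ℝ :=
  (∑ k, n k * (-Real.log (Θ k).det + (S k * Θ k).trace)) + l1 * ∑ k, offDiagL1 (Θ k) + P Θ

variable {n : ι → ℝ} {S : ι → Matrix m m ℝ} {l1 : ℝ} {P : (ι → Matrix m m ℝ) → ℝ}

lemma strictConvexOn_jointGraphicalLasso (hn : ∀ k, 0 < n k) (hl1 : 0 ≤ l1)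
    (hP : ConvexOn ℝ Set.univ P) :
    StrictConvexOn ℝ {Θ | ∀ k, (Θ k).PosDef} (jointGraphicalLasso n S l1 P) := by
  have hlik : StrictConvexOn ℝ {Θ : ι → Matrix m m ℝ | ∀ k, (Θ k).PosDef} fun Θ =>
      ∑ k, n k * (-Real.log (Θ k).det + (S k * Θ k).trace) :=
    strictConvexOn_sum_pi fun k =>
      strictConvexOn_const_mul (hn k) (strictConvexOn_neg_log_det_add_trace_mul (S k))
  have hoff : ConvexOn ℝ Set.univ fun Θ : ι → Matrix m m ℝ => l1 * ∑ k, offDiagL1 (Θ k) :=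
    convexOn_sum_offDiagL1.smul hl1
  exact (hlik.add_convexOn (hoff.subset (Set.subset_univ _) hlik.1)).add_convexOn
    (hP.subset (Set.subset_univ _) hlik.1)

lemma continuousOn_jointGraphicalLasso (hP : Continuous P) :
    ContinuousOn (jointGraphicalLasso n S l1 P) {Θ | ∀ k, (Θ k).PosDef} := by
  have hlogdet (k : ι) : ContinuousOn (fun Θ : ι → Matrix m m ℝ => Real.log (Θ k).det)
      {Θ | ∀ k, (Θ k).PosDef} :=
    (continuous_apply k).matrix_det.continuousOn.log fun Θ hΘ => (hΘ k).det_pos.ne'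
  have htrace (k : ι) : Continuous fun Θ : ι → Matrix m m ℝ => (S k * Θ k).trace :=
    (continuous_const.matrix_mul (continuous_apply k)).matrix_trace
  have hoff : Continuous fun Θ : ι → Matrix m m ℝ => ∑ k, offDiagL1 (Θ k) :=
    continuous_of_convexOn_univ convexOn_sum_offDiagL1
  exact ((continuousOn_finsetSum _ fun k _ => continuousOn_const.mul
    ((hlogdet k).neg.add (htrace k).continuousOn)).add
      (continuous_const.mul hoff).continuousOn).add hP.continuousOn

lemma exists_pos_sum_add_le_jointGraphicalLasso (hS : ∀ k, (S k).PosSemidef)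
    (hSd : ∀ k i, 0 < S k i i) (hn : ∀ k, 0 < n k) (hl1 : 0 < l1) :
    ∃ c : ι → ℝ, (∀ k, 0 < c k) ∧ ∀ Θ : ι → Matrix m m ℝ, (∀ k, (Θ k).PosDef) →
      ∑ k, n k * (c k * (Θ k).trace - Real.log (Θ k).det) + P Θ ≤
        jointGraphicalLasso n S l1 P Θ := by
  choose c hc hle using fun k => exists_pos_mul_trace_le_trace_mul_add_offDiagL1 (hS k) (hSd k)
    (div_pos hl1 (hn k))
  refine ⟨c, hc, fun Θ hΘ => ?_⟩
  unfold jointGraphicalLasso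
  rw [mul_sum, ← sum_add_distrib]
  gcongr with k
  have hnk := hn k
  calc n k * (c k * (Θ k).trace - Real.log (Θ k).det)
      ≤ n k * ((S k * Θ k).trace + l1 / n k * offDiagL1 (Θ k) - Real.log (Θ k).det) := by
        gcongr
        exact hle k (Θ k) (hΘ k).posSemidef
    _ = n k * (-Real.log (Θ k).det + (S k * Θ k).trace) + l1 * offDiagL1 (Θ k) := by
        field_simp
        ring

lemma exists_isCompact_sublevel_jointGraphicalLasso (hS : ∀ k, (S k).PosSemidef)
    (hSd : ∀ k i, 0 < S k i i) (hn : ∀ k, 0 < n k) (hl1 : 0 < l1)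
    (hP : BddBelow (Set.range P)) (Q : ℝ) :
    ∃ K : Set (ι → Matrix m m ℝ), IsCompact K ∧ K ⊆ {Θ | ∀ k, (Θ k).PosDef} ∧
      ∀ Θ, (∀ k, (Θ k).PosDef) → jointGraphicalLasso n S l1 P Θ ≤ Q → Θ ∈ K := by
  obtain ⟨c, hc, hle⟩ := exists_pos_sum_add_le_jointGraphicalLasso (P := P) hS hSd hn hl1
  obtain ⟨b, hb⟩ := hP
  set L : ι → ℝ := fun k => n k * (Fintype.card m * (1 + Real.log (c k)))
  refine ⟨{Θ | ∀ k, Θ k ∈ {A | A.PosDef ∧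
      c k * A.trace - Real.log A.det ≤ (Q - b - ∑ l, L l + L k) / n k}},
    isCompact_pi_infinite fun k => isCompact_setOf_posDef_mul_trace_sub_log_det_le (hc k) _,
    fun Θ hΘ k => (hΘ k).1, fun Θ hΘ hQ k => ⟨hΘ k, (le_div_iff₀' (hn k)).mpr ?_⟩⟩
  refine le_sub_sum_add_of_sum_le (g := L)
    (f := fun l => n l * (c l * (Θ l).trace - Real.log (Θ l).det)) (fun l => ?_) ?_ k
  · have hlog := log_det_le_mul_trace_sub (hΘ l) (hc l)
    exact mul_le_mul_of_nonneg_left (by linarith) (hn l).le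
  · linarith [hle Θ hΘ, hb (Set.mem_range_self Θ)]

theorem stmt0_general (hS : ∀ k, (S k).PosSemidef) (hSd : ∀ k i, 0 < S k i i)
    (hn : ∀ k, 0 < n k) (hl1 : 0 < l1) (hP : ConvexOn ℝ Set.univ P)
    (hPb : BddBelow (Set.range P)) :
    ∃! Θ : ι → Matrix m m ℝ, (∀ k, (Θ k).PosDef) ∧
      ∀ Θ' : ι → Matrix m m ℝ, (∀ k, (Θ' k).PosDef) →
        jointGraphicalLasso n S l1 P Θ ≤ jointGraphicalLasso n S l1 P Θ' := by
  have hconv := strictConvexOn_jointGraphicalLasso (S := S) hn hl1.le hP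
  have hcont := continuousOn_jointGraphicalLasso (n := n) (S := S) (l1 := l1)
    (continuous_of_convexOn_univ hP)
  obtain ⟨K, hK, hKpos, hsub⟩ := exists_isCompact_sublevel_jointGraphicalLasso hS hSd hn hl1 hPb
    (jointGraphicalLasso n S l1 P fun _ => 1)
  have hone : (fun _ => 1) ∈ {Θ : ι → Matrix m m ℝ | ∀ k, (Θ k).PosDef} := fun _ => PosDef.one
  obtain ⟨Θ, hΘ, hmin⟩ := exists_isMinOn_of_sublevel_subset hone hK hKpos hcont hsub
  exact ⟨Θ, ⟨hΘ, fun _ hΘ' => hmin hΘ'⟩,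
    fun Θ' ⟨hΘ', hmin'⟩ => hconv.eq_of_isMinOn hmin' hmin hΘ' hΘ⟩

end JointGraphicalLasso

section FusedPenalty

variable {ι m : Type*} [Fintype ι] [DecidableEq ι] [Fintype m]

/-- The fused lasso penalty: the sum of the entrywise `ℓ¹` distances over ordered pairs of distinct
classes, diagonal entries included. -/
def fusedPenalty (Θ : ι → Matrix m m ℝ) : ℝ :=
  ∑ k, ∑ l, if k ≠ l then ∑ i, ∑ j, |Θ k i j - Θ l i j| else 0

lemma fusedPenalty_nonneg (Θ : ι → Matrix m m ℝ) : 0 ≤ fusedPenalty Θ :=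
  sum_nonneg fun _ _ => sum_nonneg fun _ _ => by split_ifs <;> positivity

lemma convexOn_fusedPenalty :
    ConvexOn ℝ Set.univ (fusedPenalty : (ι → Matrix m m ℝ) → ℝ) := by
  refine convexOn_sum convex_univ _ fun k _ => convexOn_sum convex_univ _ fun l _ => ?_
  split_ifs
  · let proj (k : ι) : (ι → Matrix m m ℝ) →ₗ[ℝ] Matrix m m ℝ := LinearMap.proj k
    exact convexOn_sum convex_univ _ fun i _ => convexOn_sum convex_univ _ fun j _ =>
      convexOn_abs_linearMap (entryLinearMap ℝ ℝ i j ∘ₗ (proj k - proj l))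
  · exact convexOn_const 0 convex_univ

end FusedPenalty

/-- The fused joint graphical lasso objective attains its infimum over `K`-tuples of
symmetric positive definite matrices, and the minimizer is unique. -/
theorem stmt0 {p K : ℕ} (hK : 2 ≤ K) (hp : 1 ≤ p)
    (S : Fin K → Matrix (Fin p) (Fin p) ℝ) (hS : ∀ k, (S k).PosSemidef)
    (hSd : ∀ k i, 0 < S k i i)
    (n : Fin K → ℝ) (hn : ∀ k, 0 < n k)
    (l1 l2 : ℝ) (hl1 : 0 < l1) (hl2 : 0 ≤ l2) :
    ∃! Θ : Fin K → Matrix (Fin p) (Fin p) ℝ,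
      (∀ k, (Θ k).PosDef) ∧
        ∀ Θ' : Fin K → Matrix (Fin p) (Fin p) ℝ, (∀ k, (Θ' k).PosDef) →
          fusedJGL n S l1 l2 Θ ≤ fusedJGL n S l1 l2 Θ' :=
  stmt0_general hS hSd hn hl1 (convexOn_fusedPenalty.smul hl2)
    ⟨0, Set.forall_mem_range.mpr fun Θ => mul_nonneg hl2 (fusedPenalty_nonneg Θ)⟩
end

section
/- Let S ∈ ℝ^{p×p} be symmetric positive semidefinite, λ > 0, let Θ* be a symmetric positive definite minimizer of the graphical lasso objective F over symmetric positive definite p×p matrices, and let Θ₀ be symmetric positive definite. Set M := ‖Θ*‖₂ + ‖Θ₀ − Θ*‖_F (spectral norm plus Frobenius distance) and m := e^{−F(Θ₀)} M^{−(p−1)}. Then every symmetric positive definite matrix Θ satisfying F(Θ) ≤ F(Θ₀) and ‖Θ − Θ*‖_F ≤ ‖Θ₀ − Θ*‖_F has all of its eigenvalues in the interval [m, M]. -/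
open Matrix Finset

/-- The graphical lasso objective `F(Θ) = -log det Θ + trace(SΘ) + λ Σ_{i≠j} |θ_ij|`. -/
noncomputable def glObj {p : ℕ} (S : Matrix (Fin p) (Fin p) ℝ) (l : ℝ)
    (Θ : Matrix (Fin p) (Fin p) ℝ) : ℝ :=
  -Real.log Θ.det + (S * Θ).trace + l * ∑ i, ∑ j, (if i ≠ j then |Θ i j| else 0)

/-- The spectral norm (largest singular value) of a real square matrix. -/
noncomputable def specNorm {p : ℕ} (A : Matrix (Fin p) (Fin p) ℝ) : ℝ :=
  ‖Matrix.toEuclideanCLM (𝕜 := ℝ) A‖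

/-- The Frobenius norm of a real matrix. -/
noncomputable def frob {p : ℕ} (A : Matrix (Fin p) (Fin p) ℝ) : ℝ :=
  Real.sqrt (∑ i, ∑ j, (A i j) ^ 2)

/-!
The triangle inequality and `‖·‖₂ ≤ ‖·‖_F` give `‖Θ‖₂ ≤ M` on the Frobenius ball, which bounds every
eigenvalue above. For the lower bound, the trace and penalty terms of `F` are nonnegative, so
`F(Θ) ≤ c` forces `det Θ ≥ e^{-c}`; as `det Θ` is the product of the eigenvalues and all but one of
them are at most `M`, the remaining one is at least `e^{-c} M^{-(p-1)}`.
-/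

section RCLike

variable {m n 𝕜 : Type*} [Fintype m] [Fintype n] [RCLike 𝕜]

open scoped ComplexOrder MatrixOrder in
lemma trace_mul_nonneg_of_posSemidef {A B : Matrix n n 𝕜} (hA : A.PosSemidef)
    (hB : B.PosSemidef) : 0 ≤ (A * B).trace := by
  classical
  obtain ⟨C, rfl⟩ := CStarAlgebra.nonneg_iff_eq_star_mul_self.mp hB.nonneg
  rw [← Matrix.mul_assoc, trace_mul_comm, ← Matrix.mul_assoc]
  exact (hA.mul_mul_conjTranspose_same C).trace_nonneg

open scoped Matrix.Norms.Frobenius in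
lemma norm_toLp_mulVec_le_frobenius_norm_mul (A : Matrix m n 𝕜) (v : n → 𝕜) :
    ‖WithLp.toLp 2 (A *ᵥ v)‖ ≤ ‖A‖ * ‖WithLp.toLp 2 v‖ := by
  have h := frobenius_norm_mul A (replicateCol Unit v)
  rwa [← replicateCol_mulVec, frobenius_norm_replicateCol, frobenius_norm_replicateCol] at h

variable [DecidableEq n]

open scoped Matrix.Norms.L2Operator

lemma abs_eigenvalues_le_l2_opNorm {A : Matrix n n 𝕜} (hA : A.IsHermitian) (i : n) :
    |hA.eigenvalues i| ≤ ‖A‖ := by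
  have : Nonempty n := ⟨i⟩
  have hmem : (hA.eigenvalues i : 𝕜) ∈ spectrum 𝕜 A :=
    spectrum.algebraMap_mem_iff 𝕜 |>.mpr (hA.eigenvalues_mem_spectrum_real i)
  simpa only [RCLike.norm_ofReal] using spectrum.norm_le_norm_of_mem hmem

lemma norm_det_le_abs_eigenvalues_mul_l2_opNorm_pow {A : Matrix n n 𝕜} (hA : A.IsHermitian)
    (i : n) : ‖A.det‖ ≤ |hA.eigenvalues i| * ‖A‖ ^ (Fintype.card n - 1) := by
  calc ‖A.det‖ = |hA.eigenvalues i| * ∏ j ∈ univ.erase i, |hA.eigenvalues j| := by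
        rw [mul_prod_erase univ (fun j => |hA.eigenvalues j|) (mem_univ i)]
        simp only [hA.det_eq_prod_eigenvalues, norm_prod, RCLike.norm_ofReal]
    _ ≤ |hA.eigenvalues i| * ∏ _j ∈ univ.erase i, ‖A‖ := by
        gcongr with j
        exact abs_eigenvalues_le_l2_opNorm hA j
    _ = |hA.eigenvalues i| * ‖A‖ ^ (Fintype.card n - 1) := by
        rw [prod_const, card_erase_of_mem (mem_univ i), card_univ]

end RCLike

section GraphicalLasso

variable {p : ℕ}

open scoped Matrix.Norms.Frobenius in
lemma frob_eq_frobenius_norm (A : Matrix (Fin p) (Fin p) ℝ) : frob A = ‖A‖ := by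
  simp only [frob, frobenius_norm_def, Real.sqrt_eq_rpow, Real.rpow_two, Real.norm_eq_abs, sq_abs]

lemma specNorm_le_frob (A : Matrix (Fin p) (Fin p) ℝ) : specNorm A ≤ frob A := by
  refine ContinuousLinearMap.opNorm_le_bound _ (Real.sqrt_nonneg _) fun v => ?_
  rw [frob_eq_frobenius_norm]
  exact norm_toLp_mulVec_le_frobenius_norm_mul A v.ofLp

lemma specNorm_le_specNorm_add_frob_sub (A B : Matrix (Fin p) (Fin p) ℝ) :
    specNorm A ≤ specNorm B + frob (A - B) :=
  calc specNorm A ≤ specNorm B + specNorm (A - B) := by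
        simpa only [specNorm, map_sub] using norm_le_norm_add_norm_sub' _ _
    _ ≤ specNorm B + frob (A - B) := by
        gcongr
        exact specNorm_le_frob (A - B)

variable {S Θ : Matrix (Fin p) (Fin p) ℝ} {l : ℝ}

lemma neg_log_det_le_glObj (hS : S.PosSemidef) (hl : 0 ≤ l) (hΘ : Θ.PosSemidef) :
    -Real.log Θ.det ≤ glObj S l Θ := by
  have htrace : 0 ≤ (S * Θ).trace := trace_mul_nonneg_of_posSemidef hS hΘ
  have hpenalty : 0 ≤ l * ∑ i, ∑ j, (if i ≠ j then |Θ i j| else 0) := by positivity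
  rw [glObj]
  linarith

lemma exp_neg_glObj_le_det (hS : S.PosSemidef) (hl : 0 ≤ l) (hΘ : Θ.PosDef) :
    Real.exp (-glObj S l Θ) ≤ Θ.det :=
  (Real.le_log_iff_exp_le hΘ.det_pos).mp <|
    neg_le.mp (neg_log_det_le_glObj hS hl hΘ.posSemidef)

lemma eigenvalues_le_specNorm (hΘ : Θ.IsHermitian) (i : Fin p) :
    hΘ.eigenvalues i ≤ specNorm Θ :=
  (le_abs_self _).trans (abs_eigenvalues_le_l2_opNorm hΘ i)

lemma det_le_eigenvalues_mul_specNorm_pow (hΘ : Θ.PosSemidef) (i : Fin p) :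
    Θ.det ≤ hΘ.1.eigenvalues i * specNorm Θ ^ (p - 1) := by
  have h := norm_det_le_abs_eigenvalues_mul_l2_opNorm_pow hΘ.1 i
  rw [abs_of_nonneg (hΘ.eigenvalues_nonneg i), Fintype.card_fin] at h
  exact (Real.le_norm_self _).trans h

theorem stmt5_general (hS : S.PosSemidef) (hl : 0 ≤ l) (A : Matrix (Fin p) (Fin p) ℝ) {c r : ℝ}
    (hΘ : Θ.PosDef) (hc : glObj S l Θ ≤ c) (hr : frob (Θ - A) ≤ r) (i : Fin p) :
    Real.exp (-c) * (specNorm A + r) ^ (-((p : ℤ) - 1)) ≤ hΘ.1.eigenvalues i ∧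
      hΘ.1.eigenvalues i ≤ specNorm A + r := by
  have hnorm : specNorm Θ ≤ specNorm A + r :=
    (specNorm_le_specNorm_add_frob_sub Θ A).trans (by gcongr)
  set M := specNorm A + r
  have hupper : hΘ.1.eigenvalues i ≤ M := (eigenvalues_le_specNorm hΘ.1 i).trans hnorm
  refine ⟨?_, hupper⟩
  have hM : 0 < M := (hΘ.eigenvalues_pos i).trans_le hupper
  have hpow : M ^ (-((p : ℤ) - 1)) = (M ^ (p - 1))⁻¹ := by
    rw [_root_.zpow_neg, ← Nat.cast_pred i.pos, _root_.zpow_natCast]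
  rw [hpow, ← div_eq_mul_inv, div_le_iff₀ (by positivity)]
  calc Real.exp (-c) ≤ Real.exp (-glObj S l Θ) := by gcongr
    _ ≤ Θ.det := exp_neg_glObj_le_det hS hl hΘ
    _ ≤ hΘ.1.eigenvalues i * specNorm Θ ^ (p - 1) :=
        det_le_eigenvalues_mul_specNorm_pow hΘ.posSemidef i
    _ ≤ hΘ.1.eigenvalues i * M ^ (p - 1) := by
        gcongr
        exacts [(hΘ.eigenvalues_pos i).le, norm_nonneg _]

end GraphicalLasso

/-- Eigenvalue bounds on the level set of the graphical lasso objective. -/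
theorem stmt5 {p : ℕ}
    (S : Matrix (Fin p) (Fin p) ℝ) (hS : S.PosSemidef) (l : ℝ) (hl : 0 < l)
    (Θs : Matrix (Fin p) (Fin p) ℝ) (hΘs : Θs.PosDef)
    (hmin : ∀ Θ : Matrix (Fin p) (Fin p) ℝ, Θ.PosDef → glObj S l Θs ≤ glObj S l Θ)
    (Θ0 : Matrix (Fin p) (Fin p) ℝ) (hΘ0 : Θ0.PosDef)
    (M m : ℝ)
    (hM : M = specNorm Θs + frob (Θ0 - Θs))
    (hm : m = Real.exp (-(glObj S l Θ0)) * M ^ (-((p : ℤ) - 1))) :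
    ∀ Θ : Matrix (Fin p) (Fin p) ℝ, ∀ hΘ : Θ.PosDef,
      glObj S l Θ ≤ glObj S l Θ0 → frob (Θ - Θs) ≤ frob (Θ0 - Θs) →
      ∀ i, m ≤ hΘ.1.eigenvalues i ∧ hΘ.1.eigenvalues i ≤ M := by
  subst hM hm
  exact fun Θ hΘ hF hfrob => stmt5_general hS hl.le Θs hΘ hF hfrob
end

section
/- Fix K ≥ 1, a ∈ ℝ^K, α₁ > 0 and α₂ ≥ 0. For θ ∈ ℝ^K define L(θ; α₁) = (1/2) Σ_{k=1}^K (θ_k − a_k)² + α₁ Σ_{k=1}^K |θ_k| + α₂ Σ_{k≠l} |θ_k − θ_l|. If θ̂(0) is the unique minimizer of L(·; 0) (the problem with no ℓ1 term), then the unique minimizer of L(·; α₁) is given componentwise by soft-thresholding: θ̂(α₁)_k = S_{α₁}(θ̂(0)_k) = sign(θ̂(0)_k)·max(|θ̂(0)_k| − α₁, 0) for every k = 1,…,K. -/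
open Finset

/-- The soft-thresholding operator with threshold `t`. -/
noncomputable def softTh (t z : ℝ) : ℝ := Real.sign z * max (|z| - t) 0

/-- The fused lasso signal approximator objective with data `a`, ℓ1 parameter `t`
and fusion parameter `α2`. -/
noncomputable def flsa {K : ℕ} (a : Fin K → ℝ) (α2 t : ℝ) (θ : Fin K → ℝ) : ℝ :=
  (1 / 2) * ∑ k, (θ k - a k) ^ 2 + t * ∑ k, |θ k|
    + α2 * ∑ k, ∑ l, (if k ≠ l then |θ k - θ l| else 0)

/-!
The minimizer of `½ ‖y - a‖² + f y` for a convex `f` is the point `x` at which `a - x` is a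
subgradient of `f`. Soft-thresholding and its residual `z - softTh t z` are both monotone, so every
`|z - z'|` is the sum of the corresponding differences of the two parts. Hence the fusion seminorm
`p` splits as `p x = p s + p (x - s)`, where `s` is the soft-thresholding of `x`, and so every
subgradient of `p` at `x` is still one at `s`. In particular this holds for `a - x`, when `x`
minimizes the objective without `ℓ¹` term. As `x - s` is a subgradient of `t ‖·‖₁` at `s`, the sum
`a - s = (x - s) + (a - x)` is a subgradient of the full penalty at `s`, so `s` is its minimizer.
-/

open Filter WithLp
open scoped Topology RealInnerProductSpace

section Subgradient

variable {E : Type*} [NormedAddCommGroup E]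

/-- The objective whose minimizer is the value at `a` of the proximal operator of `f`. -/
noncomputable def proxObjective (f : E → ℝ) (a y : E) : ℝ :=
  1 / 2 * ‖y - a‖ ^ 2 + f y

variable [InnerProductSpace ℝ E] {f g : E → ℝ} {a u v x s : E}

/-- `u` is a subgradient of `f` at `x`: an element of the convex subdifferential `∂f(x)`, with dual
vectors represented through the inner product. -/
def IsSubgradient (f : E → ℝ) (u x : E) : Prop :=
  ∀ y, f x + ⟪u, y - x⟫ ≤ f y

theorem IsSubgradient.add (hf : IsSubgradient f u x) (hg : IsSubgradient g v x) :
    IsSubgradient (fun y => f y + g y) (u + v) x := fun y => by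
  rw [inner_add_left]
  linarith [hf y, hg y]

theorem half_norm_add_sub_sq (a x v : E) :
    1 / 2 * ‖x + v - a‖ ^ 2 = 1 / 2 * ‖x - a‖ ^ 2 - ⟪a - x, v⟫ + 1 / 2 * ‖v‖ ^ 2 := by
  rw [add_sub_right_comm, norm_add_sq_real, ← neg_sub a x, inner_neg_left, norm_neg]
  ring

theorem IsSubgradient.proxObjective_lt (h : IsSubgradient f (a - x) x) {y : E} (hy : y ≠ x) :
    proxObjective f a x < proxObjective f a y := by
  have expand := half_norm_add_sub_sq a x (y - x)
  rw [add_sub_cancel] at expand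
  have gap : 0 < ‖y - x‖ ^ 2 := pow_pos (norm_sub_pos_iff.mpr hy) 2
  unfold proxObjective
  linarith [h y]

theorem nonpos_of_forall_le_mul {b c : ℝ} (h : ∀ r, 0 < r → r ≤ 1 → b ≤ r * c) : b ≤ 0 := by
  have lim : Tendsto (fun r : ℝ => r * c) (𝓝[>] 0) (𝓝 0) :=
    (Continuous.tendsto' (by fun_prop) 0 0 (zero_mul c)).mono_left nhdsWithin_le_nhds
  refine ge_of_tendsto lim ?_
  filter_upwards [Ioc_mem_nhdsGT one_pos] with r hr using h r hr.1 hr.2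

theorem isSubgradient_of_isMinOn_proxObjective (hf : ConvexOn ℝ Set.univ f)
    (hx : IsMinOn (proxObjective f a) Set.univ x) : IsSubgradient f (a - x) x := by
  intro y
  suffices f x + ⟪a - x, y - x⟫ - f y ≤ 0 by linarith
  refine nonpos_of_forall_le_mul (c := 1 / 2 * ‖y - x‖ ^ 2) fun r hr hr1 => ?_
  have hmin : proxObjective f a x ≤ proxObjective f a (x + r • (y - x)) := isMinOn_univ_iff.mp hx _
  have hconv : f (x + r • (y - x)) ≤ (1 - r) * f x + r * f y := by
    rw [show x + r • (y - x) = (1 - r) • x + r • y by module]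
    exact hf.2 (Set.mem_univ x) (Set.mem_univ y) (sub_nonneg.mpr hr1) hr.le (sub_add_cancel 1 r)
  rw [proxObjective, proxObjective, half_norm_add_sub_sq, inner_smul_right, norm_smul, mul_pow,
    Real.norm_eq_abs, sq_abs] at hmin
  refine le_of_mul_le_mul_left ?_ hr
  linarith

theorem IsSubgradient.seminorm_inner_self {p : Seminorm ℝ E} (h : IsSubgradient p u x) :
    ⟪u, x⟫ = p x := by
  have at_zero := h 0
  have at_double := h (x + x)
  have double : p (x + x) ≤ p x + p x := map_add_le_add p x x
  rw [map_zero, zero_sub, inner_neg_right] at at_zero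
  rw [add_sub_cancel_right] at at_double
  linarith

theorem IsSubgradient.inner_le_seminorm {p : Seminorm ℝ E} (h : IsSubgradient p u x) (y : E) :
    ⟪u, y⟫ ≤ p y := by
  have at_add := h (x + y)
  rw [add_sub_cancel_left] at at_add
  linarith [map_add_le_add p x y]

theorem IsSubgradient.of_seminorm_eq_add {p : Seminorm ℝ E} (h : IsSubgradient p u x)
    (hs : p x = p s + p (x - s)) : IsSubgradient p u s := by
  intro y
  have hself := h.seminorm_inner_self
  have hres := h.inner_le_seminorm (x - s)
  have hy := h.inner_le_seminorm y
  rw [inner_sub_right] at hres ⊢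
  linarith

end Subgradient

section SoftThreshold

variable {t : ℝ}

theorem softTh_eq_max_add_min (ht : 0 ≤ t) (z : ℝ) :
    softTh t z = max (z - t) 0 + min (z + t) 0 := by
  rcases lt_trichotomy z 0 with hz | rfl | hz
  · rw [softTh, Real.sign_of_neg hz, abs_of_neg hz]
    grind
  · simp [softTh, ht]
  · rw [softTh, Real.sign_of_pos hz, abs_of_pos hz]
    grind

theorem sub_softTh_eq_max_min (ht : 0 ≤ t) (z : ℝ) :
    z - softTh t z = max (-t) (min z t) := by
  rw [softTh_eq_max_add_min ht]
  grind

theorem monotone_softTh (ht : 0 ≤ t) : Monotone (softTh t) := fun x y hxy => by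
  rw [softTh_eq_max_add_min ht, softTh_eq_max_add_min ht]
  gcongr

theorem monotone_sub_softTh (ht : 0 ≤ t) : Monotone fun z => z - softTh t z := fun x y hxy => by
  simp only [sub_softTh_eq_max_min ht]
  gcongr

theorem abs_sub_softTh_le (ht : 0 ≤ t) (z : ℝ) : |z - softTh t z| ≤ t := by
  rw [sub_softTh_eq_max_min ht, abs_le]
  exact ⟨le_max_left _ _, max_le (neg_le_self ht) (min_le_right _ _)⟩

theorem sub_softTh_mul_softTh (ht : 0 ≤ t) (z : ℝ) :
    (z - softTh t z) * softTh t z = t * |softTh t z| := by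
  rw [softTh_eq_max_add_min ht]
  grind

theorem mul_abs_softTh_add_le (ht : 0 ≤ t) (x z : ℝ) :
    t * |softTh t x| + (x - softTh t x) * (z - softTh t x) ≤ t * |z| :=
  calc t * |softTh t x| + (x - softTh t x) * (z - softTh t x)
      = (x - softTh t x) * z := by rw [mul_sub, sub_softTh_mul_softTh ht]; ring
    _ ≤ |x - softTh t x| * |z| := (le_abs_self _).trans_eq (abs_mul _ _)
    _ ≤ t * |z| := by gcongr; exact abs_sub_softTh_le ht x

theorem abs_add_sub_add_of_monotone {α G : Type*} [LinearOrder α] [AddCommGroup G] [LinearOrder G]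
    [IsOrderedAddMonoid G] {f g : α → G} (hf : Monotone f) (hg : Monotone g) (x y : α) :
    |f x + g x - (f y + g y)| = |f x - f y| + |g x - g y| := by
  rw [add_sub_add_comm, abs_add_eq_add_abs_iff]
  simp only [sub_nonneg, sub_nonpos]
  exact (le_total y x).imp (fun h => ⟨hf h, hg h⟩) fun h => ⟨hf h, hg h⟩

theorem abs_sub_eq_softTh_add_residual (ht : 0 ≤ t) (x y : ℝ) :
    |x - y| = |softTh t x - softTh t y| + |x - softTh t x - (y - softTh t y)| := by
  simpa only [add_sub_cancel] using
    abs_add_sub_add_of_monotone (monotone_softTh ht) (monotone_sub_softTh ht) x y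

end SoftThreshold

section FusedLasso

variable {ι : Type*}

/-- Componentwise soft-thresholding of a vector. -/
noncomputable def softThVec (t : ℝ) (x : EuclideanSpace ℝ ι) : EuclideanSpace ℝ ι :=
  toLp 2 fun k => softTh t (x k)

variable [Fintype ι] {w : ι → ι → ℝ} {t : ℝ}

/-- The objective of the weighted fused lasso signal approximator on a finite index set, where
`w k l` is the fusion penalty of the ordered pair `(k, l)`. -/
noncomputable def weightedFlsa (w : ι → ι → ℝ) (a : ι → ℝ) (t : ℝ) (θ : ι → ℝ) : ℝ :=
  1 / 2 * ∑ k, (θ k - a k) ^ 2 + t * ∑ k, |θ k| + ∑ k, ∑ l, w k l * |θ k - θ l|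

theorem flsa_eq_weightedFlsa {K : ℕ} (a : Fin K → ℝ) (α₂ t : ℝ) :
    flsa a α₂ t = weightedFlsa (fun _ _ => α₂) a t := by
  have diag (θ : Fin K → ℝ) (k l) : (if k ≠ l then |θ k - θ l| else 0) = |θ k - θ l| := by
    rcases eq_or_ne k l with rfl | hkl <;> simp [*]
  ext θ
  simp only [flsa, weightedFlsa, diag, mul_sum]

/-- The fusion penalty with nonnegative weights as a seminorm on Euclidean space, where the
subgradient calculus applies. -/
noncomputable def fusionSeminorm (w : ι → ι → ℝ) (hw : ∀ k l, 0 ≤ w k l) :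
    Seminorm ℝ (EuclideanSpace ℝ ι) :=
  Seminorm.of (fun x => ∑ k, ∑ l, w k l * |x k - x l|)
    (fun x y => by
      simp only [← sum_add_distrib, ← mul_add, PiLp.add_apply, add_sub_add_comm]
      gcongr with k _ l _
      · exact hw k l
      · exact abs_add_le _ _)
    (fun r x => by
      simp only [PiLp.smul_apply, smul_eq_mul, ← mul_sub, abs_mul, Real.norm_eq_abs, mul_sum,
        mul_left_comm])

theorem fusionSeminorm_apply (hw : ∀ k l, 0 ≤ w k l) (x : EuclideanSpace ℝ ι) :
    fusionSeminorm w hw x = ∑ k, ∑ l, w k l * |x k - x l| := rfl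

theorem weightedFlsa_eq_proxObjective (hw : ∀ k l, 0 ≤ w k l) (a : ι → ℝ) (t : ℝ) (θ : ι → ℝ) :
    weightedFlsa w a t θ = proxObjective (fun x => t * ∑ k, |x k| + fusionSeminorm w hw x)
      (toLp 2 a) (toLp 2 θ) := by
  simp only [weightedFlsa, proxObjective, EuclideanSpace.real_norm_sq_eq, PiLp.sub_apply,
    fusionSeminorm_apply, add_assoc]

theorem isSubgradient_l1_softThVec (ht : 0 ≤ t) (x : EuclideanSpace ℝ ι) :
    IsSubgradient (fun y : EuclideanSpace ℝ ι => t * ∑ k, |y k|) (x - softThVec t x)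
      (softThVec t x) := fun y => by
  simp only [softThVec, PiLp.inner_apply, PiLp.sub_apply, RCLike.inner_apply', conj_trivial,
    mul_sum, ← sum_add_distrib]
  exact sum_le_sum fun k _ => mul_abs_softTh_add_le ht (x k) (y k)

theorem fusionSeminorm_eq_softThVec_add_residual (hw : ∀ k l, 0 ≤ w k l) (ht : 0 ≤ t)
    (x : EuclideanSpace ℝ ι) :
    fusionSeminorm w hw x =
      fusionSeminorm w hw (softThVec t x) + fusionSeminorm w hw (x - softThVec t x) := by
  simp only [fusionSeminorm_apply, softThVec, PiLp.sub_apply, ← sum_add_distrib, ← mul_add,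
    ← abs_sub_eq_softTh_add_residual ht]

theorem stmt6_general (hw : ∀ k l, 0 ≤ w k l) (ht : 0 ≤ t) {a θ₀ : ι → ℝ}
    (h₀ : IsMinOn (weightedFlsa w a 0) Set.univ θ₀) {θ : ι → ℝ}
    (hθ : θ ≠ fun k => softTh t (θ₀ k)) :
    weightedFlsa w a t (fun k => softTh t (θ₀ k)) < weightedFlsa w a t θ := by
  set p := fusionSeminorm w hw
  set x : EuclideanSpace ℝ ι := toLp 2 θ₀
  have hmin : IsMinOn (proxObjective p (toLp 2 a)) Set.univ x := fun y _ => by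
    simpa [weightedFlsa_eq_proxObjective hw] using h₀ (Set.mem_univ (ofLp y))
  have hx : IsSubgradient p (toLp 2 a - x) x :=
    isSubgradient_of_isMinOn_proxObjective p.convexOn hmin
  have hs : IsSubgradient p (toLp 2 a - x) (softThVec t x) :=
    hx.of_seminorm_eq_add (fusionSeminorm_eq_softThVec_add_residual hw ht x)
  have hsum := (isSubgradient_l1_softThVec ht x).add hs
  rw [sub_add_sub_cancel'] at hsum
  rw [weightedFlsa_eq_proxObjective hw, weightedFlsa_eq_proxObjective hw]
  exact hsum.proxObjective_lt ((WithLp.toLp_injective 2).ne hθ)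

end FusedLasso

/-- The unique minimizer of the FLSA with ℓ1 parameter `α1 > 0` is obtained from the
unique minimizer of the problem without ℓ1 term by componentwise soft-thresholding. -/
theorem stmt6 {K : ℕ} (hK : 1 ≤ K) (a : Fin K → ℝ)
    (α1 α2 : ℝ) (h1 : 0 < α1) (h2 : 0 ≤ α2)
    (θ0 : Fin K → ℝ) (h0 : ∀ θ : Fin K → ℝ, θ ≠ θ0 → flsa a α2 0 θ0 < flsa a α2 0 θ) :
    ∀ θ : Fin K → ℝ, θ ≠ (fun k => softTh α1 (θ0 k)) →
      flsa a α2 α1 (fun k => softTh α1 (θ0 k)) < flsa a α2 α1 θ := by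
  simp only [flsa_eq_weightedFlsa] at h0 ⊢
  exact fun θ hθ => stmt6_general (fun _ _ => h2) h1.le
    (isMinOn_univ_iff.mpr fun y => (eq_or_ne y θ0).elim (fun h => h ▸ le_rfl) fun h => (h0 y h).le)
    hθ
end

section
/- Fix K ≥ 1, a ∈ ℝ^K, α₁ ≥ 0 and α₂ ≥ 0. The unique minimizer over θ ∈ ℝ^K of G(θ) = (1/2) Σ_{k=1}^K (θ_k − a_k)² + α₁ Σ_{k=1}^K |θ_k| + α₂ (Σ_{k=1}^K θ_k²)^{1/2} is given componentwise by θ_k = S_{α₁}(a_k) · max(1 − α₂ / ‖S_{α₁}(a)‖₂, 0), where S_{α₁}(a) ∈ ℝ^K is the vector with components S_{α₁}(a_k), ‖·‖₂ is the Euclidean norm, and θ = 0 when ‖S_{α₁}(a)‖₂ = 0. -/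
open Finset

/-- The group lasso subproblem objective with data `a`, ℓ1 parameter `α1`
and group parameter `α2`. -/
noncomputable def groupObj {K : ℕ} (a : Fin K → ℝ) (α1 α2 : ℝ) (θ : Fin K → ℝ) : ℝ :=
  (1 / 2) * ∑ k, (θ k - a k) ^ 2 + α1 * ∑ k, |θ k| + α2 * Real.sqrt (∑ k, (θ k) ^ 2)

/-! Stationarity for `½‖θ - a‖² + f θ` at `x` says that `a - x` is a subgradient of `f` at `x`, and
the quadratic term then forces growth by `½‖y - x‖²` away from `x`. For the norm penalty the
stationary point is obtained by shrinking `a`; soft-thresholding is the same shrinkage on the line,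
applied coordinate by coordinate. The two penalties compose because a positively homogeneous
function keeps its subgradients when the base point is scaled: the final shrinkage only rescales the
soft-thresholded vector `s`, so `a - s` stays a subgradient of the coordinatewise penalty there. -/

open scoped RealInnerProductSpace

section InnerProductSpace

variable {E : Type*} [NormedAddCommGroup E] [InnerProductSpace ℝ E]

/-- `g` is a subgradient of `f` at `x`, with the dual space identified with `E` through the inner
product. Optimality of `x` for `½‖· - a‖² + f` is stated as `IsSubgradientAt f (a - x) x`. -/
def IsSubgradientAt (f : E → ℝ) (g x : E) : Prop :=
  ∀ y, f x + ⟪g, y - x⟫ ≤ f y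

namespace IsSubgradientAt

variable {f f' : E → ℝ} {g g' x : E}

theorem add (h : IsSubgradientAt f g x) (h' : IsSubgradientAt f' g' x) :
    IsSubgradientAt (fun y => f y + f' y) (g + g') x := by
  intro y
  rw [inner_add_left]
  linarith [h y, h' y]

theorem inner_le_of_posHomogeneous (h : IsSubgradientAt f g x)
    (hf : ∀ c : ℝ, 0 ≤ c → ∀ y, f (c • y) = c * f y) (y : E) : ⟪g, y⟫ ≤ f y := by
  have at_double : f x + ⟪g, (2 : ℝ) • x - x⟫ ≤ 2 * f x := hf 2 zero_le_two x ▸ h _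
  have at_y := h y
  rw [inner_sub_right] at at_double at_y
  rw [real_inner_smul_right] at at_double
  linarith

theorem inner_eq_of_posHomogeneous (h : IsSubgradientAt f g x)
    (hf : ∀ c : ℝ, 0 ≤ c → ∀ y, f (c • y) = c * f y) : ⟪g, x⟫ = f x := by
  refine (h.inner_le_of_posHomogeneous hf x).antisymm ?_
  have at_zero : f x + ⟪g, (0 : ℝ) • x - x⟫ ≤ 0 * f x := hf 0 le_rfl x ▸ h _
  rw [zero_smul, zero_sub, inner_neg_right] at at_zero
  linarith

theorem smul_of_posHomogeneous (h : IsSubgradientAt f g x)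
    (hf : ∀ c : ℝ, 0 ≤ c → ∀ y, f (c • y) = c * f y) {c : ℝ} (hc : 0 ≤ c) :
    IsSubgradientAt f g (c • x) := by
  intro y
  rw [hf c hc, inner_sub_right, real_inner_smul_right, h.inner_eq_of_posHomogeneous hf]
  linarith [h.inner_le_of_posHomogeneous hf y]

theorem half_sq_norm_sub_add_le {a : E} (h : IsSubgradientAt f (a - x) x) (y : E) :
    1 / 2 * ‖x - a‖ ^ 2 + f x + 1 / 2 * ‖y - x‖ ^ 2 ≤ 1 / 2 * ‖y - a‖ ^ 2 + f y := by
  have expand : ‖y - a‖ ^ 2 = ‖y - x‖ ^ 2 - 2 * ⟪a - x, y - x⟫ + ‖x - a‖ ^ 2 := by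
    rw [← sub_sub_sub_cancel_right y a x, norm_sub_sq_real, real_inner_comm, norm_sub_rev a x]
  linarith [h y]

end IsSubgradientAt

theorem isSubgradientAt_mul_norm {α : ℝ} {g x : E} (hg : ‖g‖ ≤ α) (hgx : ⟪g, x⟫ = α * ‖x‖) :
    IsSubgradientAt (fun y => α * ‖y‖) g x := by
  intro y
  have cauchy_schwarz : ⟪g, y⟫ ≤ α * ‖y‖ :=
    (real_inner_le_norm g y).trans (mul_le_mul_of_nonneg_right hg (norm_nonneg y))
  rw [inner_sub_right, hgx]
  linarith

/-- Block soft-thresholding: the proximal operator of `α * ‖·‖`, which moves `s` towards the origin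
by `α` and stops there. At `s = 0` the quotient `α / ‖s‖` is a junk value, harmless because it
multiplies `s`. -/
noncomputable def shrink (α : ℝ) (s : E) : E :=
  max (1 - α / ‖s‖) 0 • s

theorem shrink_of_norm_le {α : ℝ} {s : E} (h : ‖s‖ ≤ α) : shrink α s = 0 := by
  rcases eq_or_ne s 0 with rfl | hs
  · exact smul_zero _
  · have : 1 ≤ α / ‖s‖ := (one_le_div (norm_pos_iff.mpr hs)).mpr h
    rw [shrink, max_eq_right (sub_nonpos.mpr this), zero_smul]

theorem shrink_of_le_norm {α : ℝ} {s : E} (h : α ≤ ‖s‖) : shrink α s = (1 - α / ‖s‖) • s := by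
  rw [shrink, max_eq_left (sub_nonneg.mpr (div_le_one_of_le₀ h (norm_nonneg s)))]

theorem isSubgradientAt_shrink {α : ℝ} (hα : 0 ≤ α) (s : E) :
    IsSubgradientAt (fun y => α * ‖y‖) (s - shrink α s) (shrink α s) := by
  rcases le_or_gt ‖s‖ α with h | h
  · rw [shrink_of_norm_le h, sub_zero]
    exact isSubgradientAt_mul_norm h (by rw [inner_zero_right, norm_zero, mul_zero])
  · have hs : 0 < ‖s‖ := hα.trans_lt h
    have hc : 0 ≤ 1 - α / ‖s‖ := sub_nonneg.mpr ((div_le_one hs).mpr h.le)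
    have residual : s - (1 - α / ‖s‖) • s = (α / ‖s‖) • s := by module
    rw [shrink_of_le_norm h.le, residual]
    apply isSubgradientAt_mul_norm
    · rw [norm_smul_of_nonneg (by positivity), div_mul_cancel₀ _ hs.ne']
    · rw [real_inner_smul_left, real_inner_smul_right, real_inner_self_eq_norm_sq,
        norm_smul_of_nonneg hc]
      field_simp

theorem IsSubgradientAt.add_mul_norm_shrink {f : E → ℝ} {a s : E} {α : ℝ}
    (h : IsSubgradientAt f (a - s) s) (hf : ∀ c : ℝ, 0 ≤ c → ∀ y, f (c • y) = c * f y)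
    (hα : 0 ≤ α) :
    IsSubgradientAt (fun y => f y + α * ‖y‖) (a - shrink α s) (shrink α s) := by
  rw [← sub_add_sub_cancel a s (shrink α s)]
  exact (h.smul_of_posHomogeneous hf (le_max_right _ _)).add (isSubgradientAt_shrink hα s)

end InnerProductSpace

section Blocks

variable {ι : Type*} [Fintype ι] {E : ι → Type*} [∀ k, NormedAddCommGroup (E k)]
  [∀ k, InnerProductSpace ℝ (E k)]

theorem isSubgradientAt_piLp_sum {f : ∀ k, E k → ℝ} {g x : PiLp 2 E}
    (h : ∀ k, IsSubgradientAt (f k) (g k) (x k)) :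
    IsSubgradientAt (fun y : PiLp 2 E => ∑ k, f k (y k)) g x := by
  intro y
  rw [PiLp.inner_apply, ← sum_add_distrib]
  exact sum_le_sum fun k _ => h k (y k)

/-- The objective `groupObj` with coordinates replaced by vector blocks and the `ℓ1` parameter by a
weight `w k` for each block. -/
noncomputable def weightedGroupObj (a : PiLp 2 E) (w : ι → ℝ) (α : ℝ) (θ : PiLp 2 E) : ℝ :=
  1 / 2 * ‖θ - a‖ ^ 2 + (∑ k, w k * ‖θ k‖ + α * ‖θ‖)

/-- The minimizer of `weightedGroupObj`: each block is shrunk by its own weight, and then the whole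
vector is shrunk by `α`. -/
noncomputable def groupShrink (a : PiLp 2 E) (w : ι → ℝ) (α : ℝ) : PiLp 2 E :=
  shrink α (WithLp.toLp 2 fun k => shrink (w k) (a k))

theorem isSubgradientAt_groupShrink (a : PiLp 2 E) {w : ι → ℝ} (hw : ∀ k, 0 ≤ w k) {α : ℝ}
    (hα : 0 ≤ α) :
    IsSubgradientAt (fun θ : PiLp 2 E => ∑ k, w k * ‖θ k‖ + α * ‖θ‖) (a - groupShrink a w α)
      (groupShrink a w α) := by
  set s : PiLp 2 E := WithLp.toLp 2 fun k => shrink (w k) (a k)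
  have blockwise : IsSubgradientAt (fun θ : PiLp 2 E => ∑ k, w k * ‖θ k‖) (a - s) s :=
    isSubgradientAt_piLp_sum (f := fun k v => w k * ‖v‖)
      fun k => isSubgradientAt_shrink (hw k) (a k)
  refine blockwise.add_mul_norm_shrink (fun c hc θ => ?_) hα
  simp only [PiLp.smul_apply, norm_smul_of_nonneg hc, mul_sum, mul_left_comm]

theorem stmt7_general (a : PiLp 2 E) {w : ι → ℝ} (hw : ∀ k, 0 ≤ w k) {α : ℝ} (hα : 0 ≤ α)
    {θ : PiLp 2 E} (hθ : θ ≠ groupShrink a w α) :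
    weightedGroupObj a w α (groupShrink a w α) < weightedGroupObj a w α θ := by
  have growth := (isSubgradientAt_groupShrink a hw hα).half_sq_norm_sub_add_le θ
  have : 0 < ‖θ - groupShrink a w α‖ := norm_sub_pos_iff.mpr hθ
  exact (lt_add_of_pos_right _ (by positivity)).trans_le growth

end Blocks

theorem real_sign_mul_abs (z : ℝ) : Real.sign z * |z| = z := by
  rcases lt_trichotomy z 0 with hz | rfl | hz
  · rw [Real.sign_of_neg hz, abs_of_neg hz, neg_one_mul, neg_neg]
  · rw [abs_zero, mul_zero]
  · rw [Real.sign_of_pos hz, abs_of_pos hz, one_mul]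

theorem softTh_eq_shrink (t z : ℝ) : softTh t z = shrink t z := by
  rcases eq_or_ne z 0 with rfl | hz
  · rw [softTh, Real.sign_zero, zero_mul, shrink, smul_zero]
  · have hz' : 0 < |z| := abs_pos.mpr hz
    calc softTh t z = Real.sign z * (|z| * max (1 - t / |z|) 0) := by
          rw [softTh, mul_max_of_nonneg _ _ hz'.le, mul_sub, mul_one,
            mul_div_cancel₀ _ hz'.ne', mul_zero]
      _ = shrink t z := by
          rw [← mul_assoc, real_sign_mul_abs, mul_comm, shrink, smul_eq_mul, Real.norm_eq_abs]

theorem groupObj_eq_weightedGroupObj {K : ℕ} (a : Fin K → ℝ) (α1 α2 : ℝ) (θ : Fin K → ℝ) :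
    groupObj a α1 α2 θ =
      weightedGroupObj (WithLp.toLp 2 a) (fun _ => α1) α2 (WithLp.toLp 2 θ) := by
  simp only [groupObj, weightedGroupObj, EuclideanSpace.norm_eq, PiLp.sub_apply,
    Real.norm_eq_abs, sq_abs, mul_sum, add_assoc]
  rw [Real.sq_sqrt (sum_nonneg fun k _ => sq_nonneg _), mul_sum]

theorem toLp_softTh_mul_eq_groupShrink {K : ℕ} (a : Fin K → ℝ) (α1 α2 : ℝ) :
    WithLp.toLp 2 (fun k =>
      softTh α1 (a k) * max (1 - α2 / Real.sqrt (∑ k', (softTh α1 (a k')) ^ 2)) 0) =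
      groupShrink (WithLp.toLp 2 a) (fun _ => α1) α2 := by
  ext k
  simp only [groupShrink, shrink.eq_def α2, softTh_eq_shrink, EuclideanSpace.norm_eq,
    Real.norm_eq_abs, sq_abs, PiLp.smul_apply, smul_eq_mul, mul_comm]

/-- Closed-form solution of the group lasso subproblem: the unique minimizer is
componentwise soft-thresholding followed by group shrinkage. -/
theorem stmt7 {K : ℕ} (hK : 1 ≤ K) (a : Fin K → ℝ)
    (α1 α2 : ℝ) (h1 : 0 ≤ α1) (h2 : 0 ≤ α2)
    (θh : Fin K → ℝ)
    (hθh : θh = fun k =>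
      softTh α1 (a k) * max (1 - α2 / Real.sqrt (∑ k', (softTh α1 (a k')) ^ 2)) 0) :
    ∀ θ : Fin K → ℝ, θ ≠ θh → groupObj a α1 α2 θh < groupObj a α1 α2 θ := by
  subst hθh
  intro θ hne
  rw [groupObj_eq_weightedGroupObj, groupObj_eq_weightedGroupObj, toLp_softTh_mul_eq_groupShrink]
  exact stmt7_general _ (fun _ => h1) h2
    (toLp_softTh_mul_eq_groupShrink a α1 α2 ▸ (WithLp.toLp_injective 2).ne hne)
end

section
/- Let Θ ∈ ℝ^{p×p} be symmetric positive definite and D ∈ ℝ^{p×p} be symmetric. If trace((Θ^{−1}D)²) < 1, then Θ + D is symmetric positive definite. -/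
open Matrix

/-! Factor `Θ = Bᴴ * B` and diagonalize the Hermitian matrix `(B⁻¹)ᴴ * D * B⁻¹`: this yields one
invertible `C` with `Θ = Cᴴ * C` and `D = Cᴴ * diagonal d * C`. Then `Θ⁻¹ * D` is similar to
`diagonal d`, so bounding the trace of an even power by `1` gives `∑ i, d i ^ k < 1`, which forces
`|d i| < 1` for every `i`, while `Θ + D` is congruent to `diagonal (1 + d)`. -/

theorem abs_lt_one_of_sum_pow_lt_one {ι R : Type*} [Ring R] [LinearOrder R] [IsStrictOrderedRing R]
    {s : Finset ι} {d : ι → R} {k : ℕ} (hk : Even k) (h : ∑ i ∈ s, d i ^ k < 1) {i : ι}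
    (hi : i ∈ s) : |d i| < 1 := by
  by_contra! hone
  have hpow : 1 ≤ d i ^ k := hk.pow_abs (d i) ▸ one_le_pow₀ hone
  have hle : d i ^ k ≤ ∑ j ∈ s, d j ^ k :=
    Finset.single_le_sum (fun j _ ↦ hk.pow_nonneg (d j)) hi
  exact (hpow.trans hle).not_gt h

section CommRing

variable {n R : Type*} [Fintype n] [DecidableEq n] [CommRing R]

theorem trace_inv_mul_mul_pow (A : Matrix n n R) {B : Matrix n n R} (hB : IsUnit B) (k : ℕ) :
    ((B⁻¹ * A * B) ^ k).trace = (A ^ k).trace := by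
  obtain ⟨U, rfl⟩ := hB
  rw [← coe_units_inv, Units.conj_pow', trace_units_conj']

theorem mul_inv_mul_mul_mul_cancel (A C : Matrix n n R) {B : Matrix n n R} (hB : IsUnit B) :
    (B * C)⁻¹ * (B * A * C) = C⁻¹ * A * C := by
  have hdet : IsUnit B.det := (isUnit_iff_isUnit_det B).mp hB
  rw [Matrix.mul_inv_rev, Matrix.mul_assoc B, Matrix.mul_assoc C⁻¹ B⁻¹,
    nonsing_inv_mul_cancel_left _ _ hdet, Matrix.mul_assoc]

end CommRing

section RCLike

open scoped ComplexOrder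

variable {n 𝕜 : Type*} [RCLike 𝕜] [DecidableEq n]

theorem posDef_one_add_diagonal_ofReal {d : n → ℝ} (hd : ∀ i, -1 < d i) :
    (1 + diagonal (fun i ↦ (d i : 𝕜))).PosDef := by
  rw [← diagonal_one, diagonal_add, posDef_diagonal_iff]
  intro i
  exact_mod_cast neg_lt_iff_pos_add'.mp (hd i)

variable [Fintype n]

theorem re_trace_diagonal_ofReal_pow (d : n → ℝ) (k : ℕ) :
    RCLike.re (diagonal (fun i ↦ (d i : 𝕜)) ^ k).trace = ∑ i, d i ^ k := by
  simp only [diagonal_pow, trace_diagonal, Pi.pow_apply]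
  exact_mod_cast RCLike.ofReal_re (K := 𝕜) (∑ i, d i ^ k)

open scoped MatrixOrder Matrix.Norms.L2Operator in
theorem exists_isUnit_eq_conjTranspose_mul_self {Θ : Matrix n n 𝕜} (hΘ : Θ.PosDef) :
    ∃ B : Matrix n n 𝕜, IsUnit B ∧ Θ = Bᴴ * B :=
  CStarAlgebra.isStrictlyPositive_iff_eq_star_mul_self.mp hΘ.isStrictlyPositive

theorem exists_simultaneous_diagonalization {Θ D : Matrix n n 𝕜} (hΘ : Θ.PosDef)
    (hD : D.IsHermitian) :
    ∃ (C : Matrix n n 𝕜) (d : n → ℝ),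
      IsUnit C ∧ Θ = Cᴴ * C ∧ D = Cᴴ * diagonal (fun i ↦ (d i : 𝕜)) * C := by
  obtain ⟨B, hB, rfl⟩ := exists_isUnit_eq_conjTranspose_mul_self hΘ
  have hdet : IsUnit B.det := (isUnit_iff_isUnit_det B).mp hB
  have hM : (B⁻¹ᴴ * D * B⁻¹).IsHermitian := isHermitian_conjTranspose_mul_mul _ hD
  obtain ⟨U, d, hU, hspec⟩ : ∃ (U : Matrix n n 𝕜) (d : n → ℝ),
      U * Uᴴ = 1 ∧ B⁻¹ᴴ * D * B⁻¹ = U * diagonal (fun i ↦ (d i : 𝕜)) * Uᴴ :=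
    ⟨hM.eigenvectorUnitary, hM.eigenvalues, Unitary.coe_mul_star_self _, hM.spectral_theorem⟩
  refine ⟨Uᴴ * B, d, (IsUnit.of_mul_eq_one _ hU).star.mul hB, ?_, ?_⟩
  · calc
      Bᴴ * B = Bᴴ * (U * Uᴴ) * B := by rw [hU, Matrix.mul_one]
      _ = (Uᴴ * B)ᴴ * (Uᴴ * B) := by
        simp only [conjTranspose_mul, conjTranspose_conjTranspose, Matrix.mul_assoc]
  · calc
      D = (B⁻¹ * B)ᴴ * D * (B⁻¹ * B) := by
        rw [nonsing_inv_mul B hdet, conjTranspose_one, Matrix.one_mul, Matrix.mul_one]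
      _ = Bᴴ * (B⁻¹ᴴ * D * B⁻¹) * B := by simp only [conjTranspose_mul, Matrix.mul_assoc]
      _ = (Uᴴ * B)ᴴ * diagonal (fun i ↦ (d i : 𝕜)) * (Uᴴ * B) := by
        rw [hspec]
        simp only [conjTranspose_mul, conjTranspose_conjTranspose, Matrix.mul_assoc]

theorem stmt9_general {Θ D : Matrix n n 𝕜} {k : ℕ} (hΘ : Θ.PosDef) (hD : D.IsHermitian)
    (hk : Even k) (h : RCLike.re ((Θ⁻¹ * D) ^ k).trace < 1) : (Θ + D).PosDef := by
  obtain ⟨C, d, hC, rfl, rfl⟩ := exists_simultaneous_diagonalization hΘ hD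
  have hsum : ∑ i, d i ^ k < 1 := by
    rwa [mul_inv_mul_mul_mul_cancel _ _ ((isUnit_conjTranspose C).mpr hC),
      trace_inv_mul_mul_pow _ hC, re_trace_diagonal_ofReal_pow] at h
  have hd (i : n) : -1 < d i :=
    neg_lt_of_abs_lt (abs_lt_one_of_sum_pow_lt_one hk hsum (Finset.mem_univ i))
  have hcongr : Cᴴ * C + Cᴴ * diagonal (fun i ↦ (d i : 𝕜)) * C =
      Cᴴ * (1 + diagonal (fun i ↦ (d i : 𝕜))) * C := by
    rw [Matrix.mul_add, Matrix.add_mul, Matrix.mul_one]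
  rw [hcongr]
  exact hC.posDef_star_left_conjugate_iff.mpr (posDef_one_add_diagonal_ofReal hd)

end RCLike

/-- If `Θ` is symmetric positive definite, `D` is symmetric and
`trace((Θ⁻¹ D)²) < 1`, then `Θ + D` is symmetric positive definite. -/
theorem stmt9 {p : ℕ} (Θ D : Matrix (Fin p) (Fin p) ℝ)
    (hΘ : Θ.PosDef) (hD : D.IsSymm)
    (h : ((Θ⁻¹ * D) ^ 2).trace < 1) :
    (Θ + D).PosDef :=
  stmt9_general hΘ ((conjTranspose_eq_transpose_of_trivial D).trans hD) even_two h
end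

section
/- Let S ∈ ℝ^{p×p} be symmetric and λ > 0. For every symmetric positive definite Θ ∈ ℝ^{p×p} and every symmetric U ∈ ℝ^{p×p} with max_{i,j} |U_{ij}| ≤ λ and S + U symmetric positive definite, log det(S + U) + p ≤ −log det Θ + trace(SΘ) + λ Σ_{i,j} |θ_{ij}| (weak duality between the graphical lasso problem with full ℓ1 penalty and its dual). -/
open Matrix Finset

/-!
Diagonalizing and summing `log x ≤ x - 1` over the eigenvalues gives `log det M + n ≤ tr M` for
positive definite `M`. Factor `Θ = B Bᴴ` and take `M = Bᴴ W B`: this is the Fenchel-Young inequality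
`log det W + log det Θ + n ≤ tr (W Θ)`. For `W = S + U` the right side is `tr (S Θ) + tr (U Θ)`, and
the entrywise bound on `U` bounds `tr (U Θ)` by the `ℓ1` penalty.
-/

theorem norm_trace_mul_le_sum_mul_norm {m n R : Type*} [Fintype m] [Fintype n]
    [NonUnitalSeminormedRing R] {U : Matrix m n R} {L : Matrix m n ℝ}
    (hU : ∀ i j, ‖U i j‖ ≤ L i j) (A : Matrix n m R) :
    ‖(U * A).trace‖ ≤ ∑ i, ∑ j, L i j * ‖A j i‖ :=
  norm_sum_le_of_le _ fun i _ ↦ norm_sum_le_of_le _ fun j _ ↦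
    norm_mul_le_of_le (hU i j) le_rfl

section RCLike

open scoped ComplexOrder

variable {n 𝕜 : Type*} [Fintype n] [DecidableEq n] [RCLike 𝕜]

-- A positive definite `M` has a positive real determinant, which `‖M.det‖` reads off as a real.
theorem log_norm_det_add_card_le_re_trace {M : Matrix n n 𝕜} (hM : M.PosDef) :
    Real.log ‖M.det‖ + Fintype.card n ≤ RCLike.re M.trace := by
  have hpos := hM.eigenvalues_pos
  have hdet : ‖M.det‖ = ∏ i, hM.isHermitian.eigenvalues i := by
    simp only [hM.isHermitian.det_eq_prod_eigenvalues, norm_prod, RCLike.norm_ofReal,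
      abs_of_pos (hpos _)]
  have htrace : RCLike.re M.trace = ∑ i, hM.isHermitian.eigenvalues i := by
    simp only [hM.isHermitian.trace_eq_sum_eigenvalues, map_sum, RCLike.ofReal_re]
  calc Real.log ‖M.det‖ + Fintype.card n
      = ∑ i, (Real.log (hM.isHermitian.eigenvalues i) + 1) := by
        rw [hdet, Real.log_prod fun i _ ↦ (hpos i).ne']
        simp [sum_add_distrib]
    _ ≤ ∑ i, hM.isHermitian.eigenvalues i :=
        sum_le_sum fun i _ ↦ le_sub_iff_add_le.mp (Real.log_le_sub_one_of_pos (hpos i))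
    _ = RCLike.re M.trace := htrace.symm

open scoped MatrixOrder Matrix.Norms.L2Operator in
theorem exists_isUnit_eq_mul_conjTranspose {A : Matrix n n 𝕜} (hA : A.PosDef) :
    ∃ B : Matrix n n 𝕜, IsUnit B ∧ A = B * Bᴴ :=
  CStarAlgebra.isStrictlyPositive_iff_eq_mul_star_self.mp hA.isStrictlyPositive

theorem log_norm_det_add_log_norm_det_add_card_le_re_trace_mul {W Θ : Matrix n n 𝕜}
    (hW : W.PosDef) (hΘ : Θ.PosDef) :
    Real.log ‖W.det‖ + Real.log ‖Θ.det‖ + Fintype.card n ≤ RCLike.re (W * Θ).trace := by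
  obtain ⟨B, hB, hΘB⟩ := exists_isUnit_eq_mul_conjTranspose hΘ
  have hM : (Bᴴ * W * B).PosDef := hB.posDef_star_left_conjugate_iff.mpr hW
  have hdet : (Bᴴ * W * B).det = W.det * Θ.det := by
    simp only [hΘB, det_mul]
    ring
  have htrace : (Bᴴ * W * B).trace = (W * Θ).trace := by
    rw [hΘB, trace_mul_cycle, trace_mul_comm]
  have hlog : Real.log ‖(Bᴴ * W * B).det‖ = Real.log ‖W.det‖ + Real.log ‖Θ.det‖ := by
    rw [hdet, norm_mul, Real.log_mul (norm_ne_zero_iff.mpr hW.det_pos.ne')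
      (norm_ne_zero_iff.mpr hΘ.det_pos.ne')]
  rw [← hlog, ← htrace]
  exact log_norm_det_add_card_le_re_trace hM

theorem stmt13_general {S U Θ : Matrix n n 𝕜} {L : Matrix n n ℝ}
    (hΘ : Θ.PosDef) (hU : ∀ i j, ‖U i j‖ ≤ L i j) (hSU : (S + U).PosDef) :
    Real.log ‖(S + U).det‖ + Fintype.card n ≤
      -Real.log ‖Θ.det‖ + RCLike.re (S * Θ).trace + ∑ i, ∑ j, L i j * ‖Θ i j‖ := by
  have hYoung := log_norm_det_add_log_norm_det_add_card_le_re_trace_mul hSU hΘ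
  have htrace : RCLike.re ((S + U) * Θ).trace
      = RCLike.re (S * Θ).trace + RCLike.re (U * Θ).trace := by
    rw [Matrix.add_mul, trace_add, map_add]
  have hpenalty : RCLike.re (U * Θ).trace ≤ ∑ i, ∑ j, L i j * ‖Θ i j‖ := by
    have hsymm (i j : n) : ‖Θ j i‖ = ‖Θ i j‖ := by rw [← hΘ.isHermitian.apply i j, norm_star]
    simpa only [hsymm] using
      (RCLike.re_le_norm _).trans (norm_trace_mul_le_sum_mul_norm hU Θ)
  linarith

end RCLike

/-- Weak duality for the graphical lasso with full ℓ1 penalty: every dual feasible `U`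
gives a lower bound `log det(S + U) + p` on the primal objective. -/
theorem stmt13 {p : ℕ} (S : Matrix (Fin p) (Fin p) ℝ) (hS : S.IsSymm)
    (l : ℝ) (hl : 0 < l)
    (Θ : Matrix (Fin p) (Fin p) ℝ) (hΘ : Θ.PosDef)
    (U : Matrix (Fin p) (Fin p) ℝ) (hU : U.IsSymm)
    (hUb : ∀ i j, |U i j| ≤ l) (hSU : (S + U).PosDef) :
    Real.log (S + U).det + p ≤
      -Real.log Θ.det + (S * Θ).trace + l * ∑ i, ∑ j, |Θ i j| := by
  simpa [mul_sum] using stmt13_general (L := fun _ _ ↦ l) hΘ hUb hSU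
end
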